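/- Let 𝒜 be a nonempty real central arrangement of hyperplanes and m a positive integer. Then every admissible map Φ : Ch^m → Ch is projective if and only if either (case 1) m = 1, or (case 2) 𝒜 is indecomposable with |𝒜| ≥ 3. -/

import Mathlib

/-!
A chamber is determined by its sign vector, so an admissible map is the same as a family of
unanimous functions `f j : B^m → B`, one for each hyperplane, which jointly preserve the set of
sign vectors of chambers.

If `𝒜` is decomposable, additivity of the rank says that the intersections of the two parts span
the space, so the signs on the two parts can be prescribed independently, and two different
projections may be used on them. Two hyperplanes are always decomposable, and for a single
hyperplane the maximum of two signs is not a projection.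

If `𝒜` is indecomposable, every partition of `𝒜` into two parts is crossed by a circuit: the space
of linear relations between the forms is spanned by relations of minimal support, so it would
split if all of these lived on one side. A circuit has at least three elements because the
hyperplanes are distinct, and, after twisting by the signs of its coefficients, the sign vectors
realizable on it are exactly the non-constant ones. Functions preserving the
not-all-equal relation of arity at least three are all one and the same projection: they coincide
and are self-dual, and the sets of coordinates on which `+` yields `+` form an ultrafilter on a
finite set. As circuits cross every partition, this projection is the same for all hyperplanes.
-/

noncomputable section
attribute [local instance] Classical.propDecidable

/-- A (nonempty if `ι` is nonempty) real central arrangement of hyperplanes in `ℝ^ℓ`,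
given by a family of nonzero defining linear forms with pairwise distinct kernels
(the hyperplanes `H j = ker (form j)`). -/
structure Arrangement (ℓ : ℕ) (ι : Type) [Fintype ι] where
  form : ι → ((Fin ℓ → ℝ) →ₗ[ℝ] ℝ)
  form_ne_zero : ∀ j, form j ≠ 0
  ker_injective : ∀ j k, LinearMap.ker (form j) = LinearMap.ker (form k) → j = k

namespace Arrangement

variable {ℓ : ℕ} {ι : Type} [Fintype ι]

/-- The complement `ℝ^ℓ ∖ (H₁ ∪ ⋯ ∪ Hₙ)`. -/
def Complement (A : Arrangement ℓ ι) : Set (Fin ℓ → ℝ) :=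
  {x | ∀ j, A.form j x ≠ 0}

/-- A chamber is a connected component of the complement. -/
def IsChamber (A : Arrangement ℓ ι) (C : Set (Fin ℓ → ℝ)) : Prop :=
  ∃ x ∈ A.Complement, C = connectedComponentIn A.Complement x

/-- The set (type) of chambers of the arrangement. -/
abbrev Ch (A : Arrangement ℓ ι) : Type := {C : Set (Fin ℓ → ℝ) // A.IsChamber C}

/-- `εⱼ^σ(C) = στ` when `C ⊆ Hⱼ^τ`; `B = {+,-}` is realized as `ℤˣ`, `+ = 1`, `- = -1`. -/
def eps (A : Arrangement ℓ ι) (j : ι) (σ : ℤˣ) (C : A.Ch) : ℤˣ :=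
  σ * (if ∀ x ∈ C.1, 0 < A.form j x then 1 else -1)

/-- `Φ : Ch^m → Ch` is admissible if there is a family `φⱼ^σ : B^m → B` with
`φⱼ^σ(+,…,+) = +` and `εⱼ^σ ∘ Φ = φⱼ^σ ∘ εⱼ^σ` (componentwise) for all `j, σ`. -/
def IsAdmissible (A : Arrangement ℓ ι) (m : ℕ) (Φ : (Fin m → A.Ch) → A.Ch) : Prop :=
  ∃ φ : ι → ℤˣ → ((Fin m → ℤˣ) → ℤˣ),
    (∀ j σ, φ j σ (fun _ => 1) = 1) ∧
    ∀ j σ 𝒞, A.eps j σ (Φ 𝒞) = φ j σ (fun i => A.eps j σ (𝒞 i))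

/-- `r(ℬ) = codim (⋂_{H ∈ ℬ} H)` for the subarrangement indexed by `S`. -/
def rnkOn (A : Arrangement ℓ ι) (S : Finset ι) : ℕ :=
  ℓ - Module.finrank ℝ ↥(⨅ j ∈ S, LinearMap.ker (A.form j))

/-- `r(𝒜)`. -/
def rnk (A : Arrangement ℓ ι) : ℕ := A.rnkOn Finset.univ

/-- The subarrangement indexed by `S` decomposes as a disjoint union of two nonempty
subarrangements with additive rank. -/
def DecomposableOn (A : Arrangement ℓ ι) (S : Finset ι) : Prop :=
  ∃ S₁ S₂ : Finset ι, S₁.Nonempty ∧ S₂.Nonempty ∧ Disjoint S₁ S₂ ∧ S₁ ∪ S₂ = S ∧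
    A.rnkOn S = A.rnkOn S₁ + A.rnkOn S₂

def IndecomposableOn (A : Arrangement ℓ ι) (S : Finset ι) : Prop := ¬ A.DecomposableOn S

def Decomposable (A : Arrangement ℓ ι) : Prop := A.DecomposableOn Finset.univ

def Indecomposable (A : Arrangement ℓ ι) : Prop := ¬ A.Decomposable

/-- The subarrangement of `A` consisting of the hyperplanes indexed by `S`. -/
def restrict (A : Arrangement ℓ ι) (S : Finset ι) : Arrangement ℓ {j : ι // j ∈ S} where
  form := fun j => A.form j.1
  form_ne_zero := fun j => A.form_ne_zero j.1
  ker_injective := fun j k h => Subtype.ext (A.ker_injective j.1 k.1 h)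

/-- A dependent subarrangement: `r(ℬ) < |ℬ|`. -/
def DependentOn (A : Arrangement ℓ ι) (S : Finset ι) : Prop := A.rnkOn S < S.card

/-- A circuit: a minimally dependent subarrangement. -/
def IsCircuitOn (A : Arrangement ℓ ι) (S : Finset ι) : Prop :=
  A.DependentOn S ∧ ∀ T ⊂ S, ¬ A.DependentOn T

end Arrangement

section UnitsInt

theorem exists_units_smul_pos {G : Type*} [AddCommGroup G] [LinearOrder G] [IsOrderedAddMonoid G]
    {r : G} (hr : r ≠ 0) : ∃ s : ℤˣ, 0 < s • r := by
  rcases hr.lt_or_gt with h | h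
  · exact ⟨-1, by simpa [Units.smul_def] using h⟩
  · exact ⟨1, by simpa using h⟩

theorem units_eq_of_smul_pos {G : Type*} [AddCommGroup G] [PartialOrder G] [IsOrderedAddMonoid G]
    {s t : ℤˣ} {r : G} (hs : 0 < s • r) (ht : 0 < t • r) : s = t := by
  by_contra hst
  rw [Int.units_ne_iff_eq_neg.1 hst, Units.smul_def, Units.val_neg, neg_smul] at hs
  exact (neg_pos.1 hs).not_gt ht

theorem exists_weights_smul_pos_sum_eq_zero {κ : Type*} [Fintype κ] {w : κ → ℤˣ} {a b : κ}
    (hab : w a ≠ w b) : ∃ u : κ → ℝ, (∀ j, 0 < w j • u j) ∧ ∑ j, u j = 0 := by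
  have hterm (s t : ℤˣ) : s • (((s : ℤ) : ℝ) - ((t : ℤ) : ℝ)) = if s = t then 0 else 2 := by
    rcases Int.units_eq_one_or s with rfl | rfl <;> rcases Int.units_eq_one_or t with rfl | rfl <;>
      norm_num [Units.smul_def]
  -- The double sum of the weights vanishes since `w j - w k` is antisymmetric in `j` and `k`.
  refine ⟨fun j => ∑ k, (((w j : ℤ) : ℝ) - ((w k : ℤ) : ℝ)), fun j => ?_, ?_⟩
  · obtain ⟨k, hk⟩ : ∃ k, w j ≠ w k := by
      by_contra! h
      exact hab ((h a).symm.trans (h b))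
    simp only [Finset.smul_sum, hterm]
    exact Finset.sum_pos' (fun i _ => by split_ifs <;> norm_num)
      ⟨k, Finset.mem_univ k, by simp [hk]⟩
  · simp only [Finset.sum_sub_distrib]
    rw [Finset.sum_comm, sub_self]

end UnitsInt

section NotAllEqual

variable {ι κ : Type*}

theorem eval_units_int_injective :
    Function.Injective (Function.eval : κ → (κ → ℤˣ) → ℤˣ) := by
  intro h i e
  by_contra hne
  have := congrFun e (Function.update 1 h (-1))
  simp [Function.update_of_ne (Ne.symm hne)] at this

theorem exists_forall_iff_mem_of_inter_of_compl [Finite κ] {p : Set κ → Prop} (huniv : p Set.univ)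
    (hinter : ∀ S T, p S → p T → p (S ∩ T)) (hcompl : ∀ T, p Tᶜ ↔ ¬ p T) :
    ∃ i, ∀ T, p T ↔ i ∈ T := by
  let F : Filter κ :=
    { sets := {T | p T}
      univ_sets := huniv
      sets_of_superset := fun {S T} hS hST => by
        by_contra hT
        have hempty := hinter S Tᶜ hS ((hcompl T).2 hT)
        rw [← Set.sdiff_eq, Set.sdiff_eq_empty.2 hST, ← Set.compl_univ, hcompl] at hempty
        exact hempty huniv
      inter_sets := fun {S T} => hinter S T }
  obtain ⟨i, hi⟩ := (Ultrafilter.ofComplNotMemIff F fun T =>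
    (not_congr (hcompl T)).trans not_not).eq_pure_of_finite
  refine ⟨i, fun T => ?_⟩
  rw [← Ultrafilter.mem_pure, ← hi]
  rfl

theorem exists_eq_eval_of_not_all_equal [Finite κ] {f : (κ → ℤˣ) → ℤˣ}
    (hone : f (fun _ => 1) = 1)
    (hneg : ∀ x, f (-x) = -f x)
    (hnae : ∀ x y z, f x = f y → f x = f z → ∃ i, x i = y i ∧ x i = z i) :
    ∃ i, f = Function.eval i := by
  let ind (T : Set κ) (i : κ) : ℤˣ := if i ∈ T then 1 else -1
  have hind (x : κ → ℤˣ) : ind {i | x i = 1} = x := by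
    funext i
    rcases Int.units_eq_one_or (x i) with h | h <;> simp [ind, h]
  have hcompl (T : Set κ) : f (ind Tᶜ) = 1 ↔ ¬ f (ind T) = 1 := by
    have : ind Tᶜ = -ind T := by
      funext i
      by_cases hi : i ∈ T <;> simp [ind, hi]
    rw [this, hneg, ← ne_eq (f _), Int.units_ne_iff_eq_neg, neg_eq_iff_eq_neg]
  have hinter (S T : Set κ) (hS : f (ind S) = 1) (hT : f (ind T) = 1) : f (ind (S ∩ T)) = 1 := by
    by_contra hST
    obtain ⟨i, h₁, h₂⟩ := hnae (ind S) (ind T) (ind (S ∩ T)ᶜ) (hS.trans hT.symm)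
      (hS.trans ((hcompl _).2 hST).symm)
    by_cases hiS : i ∈ S <;> by_cases hiT : i ∈ T <;> simp_all [ind]
  obtain ⟨i, hi⟩ := exists_forall_iff_mem_of_inter_of_compl
    (p := fun T => f (ind T) = 1) (by simpa [ind] using hone) hinter hcompl
  refine ⟨i, funext fun x => ?_⟩
  have hx : f x = 1 ↔ x i = 1 := by simpa only [hind, Set.mem_ofPred_eq] using hi {k | x k = 1}
  rcases Int.units_eq_one_or (x i) with h | h
  · rw [hx.2 h, Function.eval, h]
  · rw [Function.eval, h, ← Int.units_ne_iff_eq_neg, ne_eq, hx, h]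
    decide

/-- A family of functions indexed by `ι` preserves the not-all-equal relation on `ℤˣ` of arity `ι`,
stated contrapositively: if its values on the rows of an `ι × κ` matrix agree, then some column of
the matrix is constant. -/
def PreservesNotAllEqual (f : ι → (κ → ℤˣ) → ℤˣ) : Prop :=
  ∀ x : ι → κ → ℤˣ, (∀ j k, f j (x j) = f k (x k)) → ∃ i, ∀ j k, x j i = x k i

namespace PreservesNotAllEqual

variable {f : ι → (κ → ℤˣ) → ℤˣ} (hf : PreservesNotAllEqual f)
  (hconst : ∀ j s, f j (fun _ => s) = s)

include hf hconst

theorem apply_neg_of_ne {j k : ι} (hjk : j ≠ k) (x : κ → ℤˣ) : f k (-x) = -f j x := by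
  by_contra h
  rw [← ne_eq, Int.units_ne_iff_eq_neg, neg_neg] at h
  let y : ι → κ → ℤˣ := Function.update (Function.update (fun _ _ => f j x) k (-x)) j x
  have hy (l : ι) : f l (y l) = f j x := by
    rcases eq_or_ne l j with rfl | hlj
    · simp [y]
    rcases eq_or_ne l k with rfl | hlk
    · simp [y, hlj, h]
    · simp [y, hlj, hlk, hconst]
  obtain ⟨i, hi⟩ := hf y fun l l' => (hy l).trans (hy l').symm
  have := hi j k
  simp only [y, Function.update_self, Function.update_of_ne hjk.symm, Pi.neg_apply] at this
  exact Int.units_ne_iff_eq_neg.2 this rfl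

variable (hthird : ∀ a b : ι, ∃ c, c ≠ a ∧ c ≠ b)

include hthird

theorem apply_eq (j k : ι) : f j = f k := by
  obtain ⟨l, hlj, hlk⟩ := hthird j k
  funext x
  rw [← neg_inj, ← hf.apply_neg_of_ne hconst hlj.symm, hf.apply_neg_of_ne hconst hlk.symm]

theorem exists_forall_eq_eval [Finite κ] [Nonempty ι] : ∃ i, ∀ j, f j = Function.eval i := by
  obtain ⟨a⟩ := ‹Nonempty ι›
  obtain ⟨b, hba, -⟩ := hthird a a
  obtain ⟨c, hca, hcb⟩ := hthird a b
  have hall (j : ι) : f j = f a := hf.apply_eq hconst hthird j a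
  obtain ⟨i, hi⟩ := exists_eq_eval_of_not_all_equal (f := f a) (hconst a 1)
    (fun x => by rw [← hf.apply_neg_of_ne hconst hba.symm, hall b]) fun x y z hxy hxz => by
      let w : ι → κ → ℤˣ := Function.update (Function.update (fun _ => z) b y) a x
      have hw (j : ι) : f j (w j) = f a x := by
        rw [hall j]
        rcases eq_or_ne j a with rfl | hja
        · simp [w]
        rcases eq_or_ne j b with rfl | hjb
        · simp [w, hja, hxy]
        · simp [w, hja, hjb, hxz]
      obtain ⟨i, hi⟩ := hf w fun j k => (hw j).trans (hw k).symm
      exact ⟨i, by simpa [w, hba] using hi a b, by simpa [w, hca, hcb] using hi a c⟩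
  exact ⟨i, fun j => (hall j).trans hi⟩

end PreservesNotAllEqual

end NotAllEqual

section ElementaryVector

variable {ι K : Type*} [Field K] {R : Submodule K (ι → K)}

/-- An elementary vector, in the sense of Rockafellar, of a subspace `R` of `K^ι`: a nonzero vector
of `R` of minimal support. Minimality is encoded by its consequence that a vector of `R` supported
on the same coordinates is a scalar multiple. For the space of linear relations between vectors,
the supports of the elementary vectors are the circuits. -/
structure IsElementaryVector (R : Submodule K (ι → K)) (c : ι → K) : Prop where
  mem : c ∈ R
  ne_zero : c ≠ 0
  exists_eq_smul : ∀ e ∈ R, Function.support e ⊆ Function.support c → ∃ r : K, e = r • c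

theorem support_sub_div_smul_subset {S : Set ι} {d e : ι → K} {a : ι} (ha : d a ≠ 0)
    (he : Function.support e ⊆ S) (hd : Function.support d ⊆ S) :
    Function.support (e - (e a / d a) • d) ⊆ S \ {a} := by
  intro j hj
  refine ⟨?_, ?_⟩
  · by_contra hjS
    exact hj (by simp [Function.notMem_support.1 (mt (@he j) hjS),
      Function.notMem_support.1 (mt (@hd j) hjS)])
  · rintro rfl
    exact hj (by simp [ha])

variable [Finite ι]

theorem exists_isElementaryVector_support_subset {c : ι → K} (hc : c ∈ R) (hc0 : c ≠ 0) :
    ∃ d, IsElementaryVector R d ∧ Function.support d ⊆ Function.support c := by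
  obtain ⟨S, hSc, ⟨d, hd, hd0, rfl⟩, hmin⟩ := exists_minimal_le_of_wellFoundedLT
    (fun S : Set ι => ∃ d ∈ R, d ≠ 0 ∧ Function.support d = S) _ ⟨c, hc, hc0, rfl⟩
  refine ⟨d, ⟨hd, hd0, fun e he hed => ?_⟩, hSc⟩
  obtain ⟨a, ha⟩ := Function.ne_iff.1 hd0
  have hsub := support_sub_div_smul_subset ha hed subset_rfl
  refine ⟨e a / d a, sub_eq_zero.1 ?_⟩
  by_contra h0
  have ha' := hmin ⟨_, R.sub_mem he (R.smul_mem _ hd), h0, rfl⟩ (hsub.trans Set.sdiff_subset) ha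
  exact (hsub ha').2 rfl

theorem span_isElementaryVector : Submodule.span K {c | IsElementaryVector R c} = R := by
  refine le_antisymm (Submodule.span_le.2 fun c hc => hc.mem) fun c hc => ?_
  induction hS : Function.support c using WellFoundedLT.induction generalizing c with
  | _ S ih =>
    subst hS
    rcases eq_or_ne c 0 with rfl | hc0
    · exact Submodule.zero_mem _
    obtain ⟨d, hd, hdc⟩ := exists_isElementaryVector_support_subset hc hc0
    obtain ⟨a, ha⟩ := Function.ne_iff.1 hd.ne_zero
    have hlt := (support_sub_div_smul_subset ha subset_rfl hdc).trans_ssubset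
      (Set.sdiff_singleton_ssubset.2 (hdc ha))
    have hspan := ih _ hlt _ (R.sub_mem hc (R.smul_mem _ hd.mem)) rfl
    rw [← sub_add_cancel c ((c a / d a) • d)]
    exact Submodule.add_mem _ hspan (Submodule.smul_mem _ _ (Submodule.subset_span hd))

theorem indicator_mem_of_forall_isElementaryVector {P : Set ι}
    (h : ∀ d, IsElementaryVector R d → Function.support d ⊆ P ∨ Function.support d ⊆ Pᶜ)
    {c : ι → K} (hc : c ∈ R) : P.indicator c ∈ R := by
  rw [← span_isElementaryVector (R := R)] at hc
  induction hc using Submodule.span_induction with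
  | mem d hd =>
    rcases h d hd with hdP | hdP
    · rw [Set.indicator_eq_self.2 hdP]
      exact hd.mem
    · rw [Set.indicator_eq_zero'.2 (Set.disjoint_left.2 hdP)]
      exact R.zero_mem
  | zero => simp
  | add x y _ _ hx hy => rw [Set.indicator_add']; exact R.add_mem hx hy
  | smul r x _ hx => exact (Set.indicator_const_smul P r x).symm ▸ R.smul_mem r hx

end ElementaryVector

section LinearForms

variable {ι K E : Type*} [Field K] [AddCommGroup E] [Module K E]

/-- The common kernel of the linear forms `α j`, `j ∈ S`: the flat of the arrangement of the
hyperplanes `ker (α j)` cut out by those indexed by `S`. -/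
def flat (α : ι → Module.Dual K E) (S : Set ι) : Submodule K E :=
  ⨅ j ∈ S, LinearMap.ker (α j)

theorem mem_flat {α : ι → Module.Dual K E} {S : Set ι} {x : E} :
    x ∈ flat α S ↔ ∀ j ∈ S, α j x = 0 := by
  simp [flat]

theorem flat_union (α : ι → Module.Dual K E) (S T : Set ι) :
    flat α (S ∪ T) = flat α S ⊓ flat α T :=
  iInf_union

theorem finrank_sub_finrank_inf_eq_add_iff [FiniteDimensional K E] (U W : Submodule K E) :
    Module.finrank K E - Module.finrank K ↥(U ⊓ W) =
      (Module.finrank K E - Module.finrank K U) + (Module.finrank K E - Module.finrank K W) ↔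
    U ⊔ W = ⊤ := by
  have hdim := Submodule.finrank_sup_add_finrank_inf_eq U W
  have hU := U.finrank_le
  have hW := W.finrank_le
  have hsup := (U ⊔ W).finrank_le
  have hinf := Submodule.finrank_mono (inf_le_left : U ⊓ W ≤ U)
  refine ⟨fun h => Submodule.eq_top_of_finrank_eq (by omega), fun h => ?_⟩
  rw [h, finrank_top] at hdim
  omega

variable [Fintype ι] (α : ι → Module.Dual K E)

theorem exists_linearCombination_eq_of_flat_le_ker {S : Set ι} {f : Module.Dual K E}
    (hf : flat α S ≤ LinearMap.ker f) :
    ∃ a : ι → K, Function.support a ⊆ S ∧ Fintype.linearCombination K α a = f := by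
  have hspan : f ∈ Submodule.span K (α '' S) := by
    rw [Set.image_eq_range]
    refine mem_span_of_iInf_ker_le_ker fun x hx => hf (mem_flat.2 fun j hj => ?_)
    exact (Submodule.mem_iInf _).1 hx ⟨j, hj⟩
  obtain ⟨a, ha, rfl⟩ := (Finsupp.mem_span_image_iff_linearCombination K).1 hspan
  refine ⟨a, by simpa [Finsupp.mem_supported] using ha, ?_⟩
  rw [← Finsupp.linearCombination_eq_fintype_linearCombination_apply]
  simp

/-- The space of linear relations `∑ j, c j • α j = 0`. -/
def relations : Submodule K (ι → K) :=
  LinearMap.ker (Fintype.linearCombination K α)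

variable {α}

theorem mem_relations {c : ι → K} : c ∈ relations α ↔ ∑ j, c j • α j = 0 :=
  Iff.rfl

theorem sum_mul_apply_eq_zero {c : ι → K} (hc : c ∈ relations α) (x : E) :
    ∑ j, c j * α j x = 0 := by
  simpa using LinearMap.congr_fun (mem_relations.1 hc) x

/-- A form vanishing on both flats is a combination of either family; if no circuit crosses, the
relation equating the two combinations splits, so the form is zero. -/
theorem flat_sup_flat_compl_eq_top {P : Set ι}
    (h : ∀ d, IsElementaryVector (relations α) d →
      Function.support d ⊆ P ∨ Function.support d ⊆ Pᶜ) :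
    flat α P ⊔ flat α Pᶜ = ⊤ := by
  by_contra htop
  obtain ⟨f, hf0, hf⟩ := Submodule.exists_le_ker_of_lt_top _ (lt_top_iff_ne_top.2 htop)
  obtain ⟨a, haP, ha⟩ := exists_linearCombination_eq_of_flat_le_ker α (le_sup_left.trans hf)
  obtain ⟨b, hbP, hb⟩ := exists_linearCombination_eq_of_flat_le_ker α (le_sup_right.trans hf)
  have hrel : a - b ∈ relations α := by
    rw [relations, LinearMap.mem_ker, map_sub, ha, hb, sub_self]
  have hind : P.indicator (a - b) = a := by
    rw [Set.indicator_sub', Set.indicator_eq_self.2 haP,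
      Set.indicator_eq_zero'.2 (Set.disjoint_left.2 hbP), sub_zero]
  have harel := indicator_mem_of_forall_isElementaryVector h hrel
  rw [hind] at harel
  exact hf0 (ha.symm.trans harel)

theorem exists_forall_apply_eq_of_relations {t : ι → K}
    (ht : ∀ e ∈ relations α, ∑ j, e j * t j = 0) : ∃ x, ∀ j, α j x = t j := by
  suffices hmem : t ∈ LinearMap.range (LinearMap.pi α) by
    obtain ⟨x, rfl⟩ := hmem
    exact ⟨x, fun j => rfl⟩
  by_contra hmem
  obtain ⟨g, hgt, hg⟩ := Submodule.exists_le_ker_of_notMem hmem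
  have hgsum (v : ι → K) : g v = ∑ j, g (Pi.single j 1) * v j := by
    conv_lhs => rw [pi_eq_sum_univ' v]
    simp [mul_comm]
  have hgrel : (fun j => g (Pi.single j 1)) ∈ relations α := by
    rw [mem_relations]
    ext x
    simpa using (hgsum (LinearMap.pi α x)).symm.trans (hg ⟨x, rfl⟩)
  exact hgt ((hgsum t).trans (ht _ hgrel))

theorem IsElementaryVector.exists_forall_apply_eq {c : ι → K}
    (hc : IsElementaryVector (relations α) c) {t : Function.support c → K}
    (ht : ∑ j : Function.support c, c j * t j = 0) :
    ∃ x, ∀ j : Function.support c, α j x = t j := by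
  refine exists_forall_apply_eq_of_relations (α := fun j : Function.support c => α j)
    fun e he => ?_
  let e' : ι → K := Function.extend Subtype.val e 0
  have he'val (j : Function.support c) : e' j = e j := Subtype.val_injective.extend_apply e _ j
  have he'zero (j : ι) (hj : j ∉ Set.range (Subtype.val : Function.support c → ι)) : e' j = 0 :=
    Function.extend_apply' e _ j hj
  have he' : e' ∈ relations α := by
    rw [mem_relations, ← mem_relations.1 he]
    exact (Fintype.sum_of_injective _ Subtype.val_injective _ _
      (fun j hj => by rw [he'zero j hj, zero_smul]) fun j => by rw [he'val]).symm
  obtain ⟨r, hr⟩ := hc.exists_eq_smul e' he' fun j hj => by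
    by_contra hjc
    exact hj (he'zero j (by simpa using hjc))
  calc ∑ j, e j * t j = r * ∑ j : Function.support c, c j * t j := by
        rw [Finset.mul_sum]
        refine Finset.sum_congr rfl fun j _ => ?_
        rw [← he'val, hr, Pi.smul_apply, smul_eq_mul, mul_assoc]
    _ = 0 := by rw [ht, mul_zero]

end LinearForms

section RealLinearForms

variable {ι E : Type*} [AddCommGroup E] [Module ℝ E] {α : ι → Module.Dual ℝ E}

theorem exists_forall_ne_zero_and_smul_pos [Finite ι] (hα : ∀ j, α j ≠ 0) (x : E) :
    ∃ y, ∀ j, α j y ≠ 0 ∧ ∀ s : ℤˣ, 0 < s • α j x → 0 < s • α j y := by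
  obtain ⟨v, hv⟩ := Module.Dual.exists_forall_ne_zero_of_forall_exists α
    fun j => DFunLike.ne_iff.1 (hα j)
  have hne (j : ι) : ∀ᶠ ε in nhdsWithin (0 : ℝ) {0}ᶜ, α j x + ε * α j v ≠ 0 := by
    filter_upwards [nhdsNE_le_cofinite 0 (Filter.eventually_cofinite_ne (-α j x / α j v))]
      with ε hε h
    exact hε (by rw [eq_div_iff (hv j)]; linarith)
  have hpos (j : ι) (s : ℤˣ) : ∀ᶠ ε in nhdsWithin (0 : ℝ) {0}ᶜ,
      0 < s • α j x → 0 < s • (α j x + ε * α j v) := by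
    by_cases hx : 0 < s • α j x
    · have hcont : Continuous fun ε : ℝ => s • (α j x + ε * α j v) := by fun_prop
      filter_upwards [(hcont.tendsto' 0 _ (by simp)).eventually (lt_mem_nhds hx)
        |>.filter_mono nhdsWithin_le_nhds] with ε hε _ using hε
    · exact Filter.Eventually.of_forall fun _ h => absurd h hx
  obtain ⟨ε, hε⟩ := (Filter.eventually_all.2 fun j =>
    (hne j).and (Filter.eventually_all.2 (hpos j))).exists
  exact ⟨x + ε • v, by simpa using hε⟩

theorem IsElementaryVector.exists_forall_smul_apply_pos [Fintype ι] {c : ι → ℝ}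
    (hc : IsElementaryVector (relations α) c) {σ w : Function.support c → ℤˣ}
    (hσ : ∀ j, 0 < σ j • c j) {a b : Function.support c} (hab : w a ≠ w b) :
    ∃ x, ∀ j : Function.support c, 0 < (σ j * w j) • α j x := by
  obtain ⟨u, hu, hsum⟩ := exists_weights_smul_pos_sum_eq_zero hab
  obtain ⟨x, hx⟩ := hc.exists_forall_apply_eq (t := fun j => u j / c j) (by
    rw [← hsum]
    exact Finset.sum_congr rfl fun j _ => mul_div_cancel₀ (u j) j.2)
  refine ⟨x, fun j => ?_⟩
  have hprod : 0 < (σ j • c j) * ((σ j * w j) • α j x) := by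
    rw [smul_mul_smul_comm, ← mul_assoc, Int.units_mul_self, one_mul, hx, mul_div_cancel₀ _ j.2]
    exact hu j
  exact (pos_iff_pos_of_mul_pos hprod).1 (hσ j)

theorem exists_mul_ne_mul_of_mem_relations [Fintype ι] {c : ι → ℝ} (hc : c ∈ relations α)
    (hc0 : c ≠ 0) {σ s : Function.support c → ℤˣ} (hσ : ∀ j, 0 < σ j • c j) {x : E}
    (hs : ∀ j : Function.support c, 0 < s j • α j x) : ∃ j k, σ j * s j ≠ σ k * s k := by
  by_contra! h
  obtain ⟨a, ha⟩ := Function.ne_iff.1 hc0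
  have hpos (j : Function.support c) : 0 < (σ ⟨a, ha⟩ * s ⟨a, ha⟩) • (c j * α j x) := by
    rw [h ⟨a, ha⟩ j, ← smul_mul_smul_comm]
    exact mul_pos (hσ j) (hs j)
  have hsum : ∑ j : Function.support c, c j * α j x = 0 :=
    (Fintype.sum_of_injective _ Subtype.val_injective _ _ (fun j hj => by
      have hcj : c j = 0 := by simpa using hj
      rw [hcj, zero_mul]) fun _ => rfl).trans (sum_mul_apply_eq_zero hc x)
  have := Finset.sum_pos (fun j _ => hpos j) ⟨⟨a, ha⟩, Finset.mem_univ _⟩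
  rw [← Finset.smul_sum, hsum, smul_zero] at this
  exact this.false

end RealLinearForms

namespace Arrangement

variable {ℓ : ℕ} {ι : Type} [Fintype ι] (A : Arrangement ℓ ι)

section Chambers

/-- The sign vector of a chamber, recording on which side of each hyperplane it lies. -/
def signVector (C : A.Ch) (j : ι) : ℤˣ :=
  A.eps j 1 C

theorem eps_eq_mul_signVector (j : ι) (σ : ℤˣ) (C : A.Ch) :
    A.eps j σ C = σ * A.signVector C j := by
  simp [signVector, eps]

theorem continuous_form (j : ι) : Continuous (A.form j) :=
  LinearMap.continuous_of_finiteDimensional _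

variable {A}

theorem exists_mem_chamber (C : A.Ch) : ∃ x, x ∈ C.1 := by
  obtain ⟨_, x, hx, rfl⟩ := C
  exact ⟨x, mem_connectedComponentIn hx⟩

theorem chamber_subset_complement (C : A.Ch) : C.1 ⊆ A.Complement := by
  obtain ⟨_, x, hx, rfl⟩ := C
  exact connectedComponentIn_subset _ _

theorem isPreconnected_chamber (C : A.Ch) : IsPreconnected C.1 := by
  obtain ⟨_, x, hx, rfl⟩ := C
  exact isPreconnected_connectedComponentIn

theorem chamber_eq_connectedComponentIn {C : A.Ch} {x : Fin ℓ → ℝ} (hx : x ∈ C.1) :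
    C.1 = connectedComponentIn A.Complement x := by
  obtain ⟨_, y, hy, rfl⟩ := C
  exact connectedComponentIn_eq hx

theorem signVector_smul_form_pos {C : A.Ch} {x : Fin ℓ → ℝ} (hx : x ∈ C.1) (j : ι) :
    0 < A.signVector C j • A.form j x := by
  by_cases h : ∀ y ∈ C.1, 0 < A.form j y
  · simpa [signVector, eps, if_pos h] using h x hx
  · obtain ⟨y, hy, hyj⟩ : ∃ y ∈ C.1, A.form j y ≤ 0 := by simpa using h
    have hxj : A.form j x < 0 := by
      by_contra! hxj
      obtain ⟨z, hz, hz0⟩ := (isPreconnected_chamber C).intermediate_value hy hx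
        (A.continuous_form j).continuousOn ⟨hyj, hxj⟩
      exact chamber_subset_complement C hz j hz0
    simpa [signVector, eps, if_neg h, Units.smul_def] using hxj

variable (A) in
theorem signVector_injective : Function.Injective A.signVector := by
  intro C D hCD
  obtain ⟨x, hx⟩ := exists_mem_chamber C
  obtain ⟨y, hy⟩ := exists_mem_chamber D
  let V : Set (Fin ℓ → ℝ) := {z | ∀ j, 0 < A.signVector C j • A.form j z}
  have hVconvex : Convex ℝ V := by
    simp only [V, Set.ofPred_forall]
    exact convex_iInter fun j => convex_halfSpace_gt (A.signVector C j • A.form j).isLinear 0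
  have hVsub : V ⊆ A.Complement := fun z hz j hj => by simpa [hj] using hz j
  have hxV : x ∈ V := signVector_smul_form_pos hx
  have hyV : y ∈ V := fun j => hCD ▸ signVector_smul_form_pos hy j
  have hyx := hVconvex.isPreconnected.subset_connectedComponentIn hxV hVsub hyV
  apply Subtype.ext
  rw [chamber_eq_connectedComponentIn hx, chamber_eq_connectedComponentIn hy]
  exact connectedComponentIn_eq hyx

variable (A) in
theorem exists_signVector_eq_of_smul_pos (x : Fin ℓ → ℝ) :
    ∃ C : A.Ch, ∀ j s, 0 < s • A.form j x → A.signVector C j = s := by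
  obtain ⟨y, hy⟩ := exists_forall_ne_zero_and_smul_pos A.form_ne_zero x
  have hyA : y ∈ A.Complement := fun j => (hy j).1
  refine ⟨⟨_, y, hyA, rfl⟩, fun j s hs => ?_⟩
  exact units_eq_of_smul_pos (signVector_smul_form_pos (mem_connectedComponentIn hyA) j)
    ((hy j).2 s hs)

variable (A) in
theorem exists_signVector_apply_eq (j : ι) (s : ℤˣ) : ∃ C : A.Ch, A.signVector C j = s := by
  obtain ⟨x, hx⟩ := LinearMap.surjective (A.form_ne_zero j) ((s : ℤ) : ℝ)
  obtain ⟨C, hC⟩ := A.exists_signVector_eq_of_smul_pos x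
  refine ⟨C, hC j s ?_⟩
  rcases Int.units_eq_one_or s with rfl | rfl <;> simp [hx, Units.smul_def]

end Chambers

section Polymorphisms

variable {κ : Type*}

/-- A family `f j : B^κ → B`, one function for each hyperplane, which is unanimous and maps
`κ`-tuples of sign vectors of chambers to sign vectors of chambers; in the language of constraint
satisfaction, an idempotent multi-sorted polymorphism of the set of covectors of full support. -/
structure IsPolymorphism (f : ι → (κ → ℤˣ) → ℤˣ) : Prop where
  apply_const : ∀ j s, f j (fun _ => s) = s
  exists_signVector_eq : ∀ 𝒞 : κ → A.Ch, ∃ D : A.Ch,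
    ∀ j, A.signVector D j = f j fun i => A.signVector (𝒞 i) j

variable {A}

theorem isAdmissible_iff {m : ℕ} {Φ : (Fin m → A.Ch) → A.Ch} :
    A.IsAdmissible m Φ ↔ ∃ f : ι → (Fin m → ℤˣ) → ℤˣ, (∀ j s, f j (fun _ => s) = s) ∧
      ∀ j 𝒞, A.signVector (Φ 𝒞) j = f j fun i => A.signVector (𝒞 i) j := by
  constructor
  · rintro ⟨φ, hφ1, hφ⟩
    refine ⟨fun j => φ j 1, fun j s => ?_, fun j 𝒞 => hφ j 1 𝒞⟩
    obtain ⟨C, hC⟩ := A.exists_signVector_apply_eq j s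
    have h₁ : A.signVector (Φ fun _ => C) j = φ j 1 fun _ => s :=
      (hφ j 1 fun _ => C).trans (congrArg (φ j 1) (funext fun _ => hC))
    have h₂ : s * A.signVector (Φ fun _ => C) j = 1 := by
      simpa only [eps_eq_mul_signVector, hC, Int.units_mul_self, hφ1] using hφ j s fun _ => C
    exact h₁.symm.trans ((eq_inv_of_mul_eq_one_right h₂).trans (Int.units_inv_eq_self s))
  · rintro ⟨f, hf, hΦ⟩
    refine ⟨fun j σ v => σ * f j fun i => σ * v i, fun j σ => ?_, fun j σ 𝒞 => ?_⟩
    · simp only [mul_one, hf, Int.units_mul_self]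
    · simp only [eps_eq_mul_signVector, ← mul_assoc, Int.units_mul_self, one_mul, hΦ]

variable (A) in
theorem forall_isAdmissible_exists_eq_proj_iff (m : ℕ) :
    (∀ Φ : (Fin m → A.Ch) → A.Ch, A.IsAdmissible m Φ → ∃ h, Φ = fun 𝒞 => 𝒞 h) ↔
      ∀ f : ι → (Fin m → ℤˣ) → ℤˣ, A.IsPolymorphism f → ∃ h, ∀ j, f j = Function.eval h := by
  constructor
  · intro H f hf
    choose Φ hΦ using hf.exists_signVector_eq
    obtain ⟨h, rfl⟩ := H Φ (isAdmissible_iff.2 ⟨f, hf.apply_const, fun j 𝒞 => hΦ 𝒞 j⟩)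
    refine ⟨h, fun j => funext fun v => ?_⟩
    choose 𝒞 h𝒞 using fun i => A.exists_signVector_apply_eq j (v i)
    simpa only [h𝒞] using (hΦ 𝒞 j).symm
  · intro H Φ hΦ
    obtain ⟨f, hf, hfΦ⟩ := isAdmissible_iff.1 hΦ
    obtain ⟨h, hh⟩ := H f ⟨hf, fun 𝒞 => ⟨Φ 𝒞, fun j => hfΦ j 𝒞⟩⟩
    exact ⟨h, funext fun 𝒞 => A.signVector_injective <| funext fun j => by rw [hfΦ, hh]⟩

end Polymorphisms

section Decomposability

variable {A}

theorem rnkOn_union_eq_add_iff {S T : Finset ι} :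
    A.rnkOn (S ∪ T) = A.rnkOn S + A.rnkOn T ↔ flat A.form S ⊔ flat A.form T = ⊤ := by
  rw [← finrank_sub_finrank_inf_eq_add_iff, ← flat_union, ← Finset.coe_union,
    Module.finrank_fin_fun]
  rfl

theorem decomposable_iff :
    A.Decomposable ↔ ∃ P : Set ι, P.Nonempty ∧ Pᶜ.Nonempty ∧
      flat A.form P ⊔ flat A.form Pᶜ = ⊤ := by
  constructor
  · rintro ⟨S, T, hS, hT, hdisj, hunion, hrank⟩
    obtain rfl : Sᶜ = T := (IsCompl.of_eq hdisj.eq_bot hunion).compl_eq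
    rw [← hunion, rnkOn_union_eq_add_iff, Finset.coe_compl] at hrank
    exact ⟨S, hS, by rwa [← Finset.coe_compl, Finset.coe_nonempty], hrank⟩
  · rintro ⟨P, hP, hPc, hflat⟩
    refine ⟨P.toFinset, P.toFinsetᶜ, by simpa, by simpa [← Set.toFinset_compl],
      disjoint_compl_right, Finset.union_compl _, ?_⟩
    rw [← Finset.union_compl P.toFinset, rnkOn_union_eq_add_iff, Finset.coe_compl, Set.coe_toFinset]
    exact hflat

theorem decomposable_of_card_eq_two (h : Fintype.card ι = 2) : A.Decomposable := by
  obtain ⟨a, b, hab, huniv⟩ := Finset.card_eq_two.1 (Finset.card_univ.trans h)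
  have hcompl : ({a} : Set ι)ᶜ = {b} := by
    ext j
    have hj := Finset.mem_univ j
    rw [huniv, Finset.mem_insert, Finset.mem_singleton] at hj
    rcases hj with rfl | rfl <;> simp [hab, hab.symm]
  refine decomposable_iff.2 ⟨{a}, by simp, by simp [hcompl], ?_⟩
  have hcoatom (j : ι) : IsCoatom (LinearMap.ker (A.form j)) :=
    LinearMap.isCoatom_ker_of_surjective (LinearMap.surjective (A.form_ne_zero j))
  simpa [hcompl, flat] using (hcoatom a).sup_eq_top_of_ne (hcoatom b) (mt (A.ker_injective a b) hab)

theorem Indecomposable.exists_isElementaryVector (hA : A.Indecomposable) {P : Set ι}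
    (hP : P.Nonempty) (hPc : Pᶜ.Nonempty) :
    ∃ c, IsElementaryVector (relations A.form) c ∧ (∃ a ∈ P, c a ≠ 0) ∧ ∃ b ∉ P, c b ≠ 0 := by
  by_contra! h
  refine hA (decomposable_iff.2 ⟨P, hP, hPc, flat_sup_flat_compl_eq_top fun d hd => ?_⟩)
  by_cases ha : ∃ a ∈ P, d a ≠ 0
  · exact Or.inl fun b hb => by_contra fun hbP => hb (h d hd ha b hbP)
  · push Not at ha
    exact Or.inr fun b hb hbP => hb (ha b hbP)

theorem exists_ne_apply_ne_zero_of_mem_relations {c : ι → ℝ} (hc : c ∈ relations A.form)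
    (hc0 : c ≠ 0) (a : ι) : ∃ d, d ≠ a ∧ c d ≠ 0 := by
  by_contra! h
  have ha : c a ≠ 0 := fun ha => hc0 <| funext fun d => by
    by_cases hd : d = a
    · rw [hd, ha, Pi.zero_apply]
    · exact h d hd
  have hsum := mem_relations.1 hc
  rw [Fintype.sum_eq_single a fun d hd => by rw [h d hd, zero_smul]] at hsum
  exact (smul_ne_zero ha (A.form_ne_zero a)) hsum

theorem exists_ne_ne_apply_ne_zero_of_mem_relations {c : ι → ℝ} (hc : c ∈ relations A.form)
    (hc0 : c ≠ 0) (a b : ι) : ∃ d, d ≠ a ∧ d ≠ b ∧ c d ≠ 0 := by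
  by_contra! h
  have hb : a ≠ b ∧ c b ≠ 0 := by
    obtain ⟨d, hda, hd⟩ := exists_ne_apply_ne_zero_of_mem_relations hc hc0 a
    obtain rfl : d = b := by_contra fun hdb => hd (h d hda hdb)
    exact ⟨hda.symm, hd⟩
  have ha : c a ≠ 0 := by
    obtain ⟨d, hdb, hd⟩ := exists_ne_apply_ne_zero_of_mem_relations hc hc0 b
    obtain rfl : d = a := by_contra fun hda => hd (h d hda hdb)
    exact hd
  refine hb.1 (A.ker_injective a b (Submodule.ext fun x => ?_))
  have hsum := sum_mul_apply_eq_zero hc x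
  rw [Fintype.sum_eq_add a b hb.1 fun d hd => by rw [h d hd.1 hd.2, zero_mul]] at hsum
  rw [LinearMap.mem_ker, LinearMap.mem_ker]
  constructor <;> intro hx
  · simpa [hx, hb.2] using hsum
  · simpa [hx, ha] using hsum

theorem exists_signVector_eq_ite {P : Set ι} (h : flat A.form P ⊔ flat A.form Pᶜ = ⊤)
    (C D : A.Ch) :
    ∃ E : A.Ch, ∀ j, A.signVector E j = if j ∈ P then A.signVector C j else A.signVector D j := by
  obtain ⟨x, hx⟩ := exists_mem_chamber C
  obtain ⟨y, hy⟩ := exists_mem_chamber D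
  obtain ⟨u, hu, v, hv, huv⟩ := Submodule.mem_sup.1 (h ▸ Submodule.mem_top : x - y ∈ _)
  rw [mem_flat] at hu hv
  obtain ⟨E, hE⟩ := A.exists_signVector_eq_of_smul_pos (x - u)
  refine ⟨E, fun j => hE j _ ?_⟩
  split_ifs with hj
  · rw [map_sub, hu j hj, sub_zero]
    exact signVector_smul_form_pos hx j
  · have hxu : x - u = y + v := by rw [sub_eq_iff_eq_add.1 huv.symm]; abel
    rw [hxu, map_add, hv j hj, add_zero]
    exact signVector_smul_form_pos hy j

end Decomposability

section Main

variable {A} {κ : Type*}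

theorem Decomposable.exists_isPolymorphism [Nontrivial κ] (hA : A.Decomposable) :
    ∃ f : ι → (κ → ℤˣ) → ℤˣ, A.IsPolymorphism f ∧ ¬ ∃ h, ∀ j, f j = Function.eval h := by
  obtain ⟨P, ⟨a, ha⟩, ⟨b, hb⟩, hflat⟩ := decomposable_iff.1 hA
  obtain ⟨i, k, hik⟩ := exists_pair_ne κ
  refine ⟨fun j v => if j ∈ P then v i else v k, ⟨fun j s => ite_self s, fun 𝒞 =>
    exists_signVector_eq_ite hflat (𝒞 i) (𝒞 k)⟩, fun ⟨h, hh⟩ => hik ?_⟩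
  have hi : (Function.eval i : (κ → ℤˣ) → ℤˣ) = Function.eval h := by simpa [ha] using hh a
  have hk : (Function.eval k : (κ → ℤˣ) → ℤˣ) = Function.eval h := by
    simpa [show b ∉ P from hb] using hh b
  exact eval_units_int_injective (hi.trans hk.symm)

theorem exists_isPolymorphism_of_card_eq_one [Nontrivial κ] (hcard : Fintype.card ι = 1) :
    ∃ f : ι → (κ → ℤˣ) → ℤˣ, A.IsPolymorphism f ∧ ¬ ∃ h, ∀ j, f j = Function.eval h := by
  obtain ⟨a, ha⟩ := Fintype.card_eq_one_iff.1 hcard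
  obtain ⟨i, k, hik⟩ := exists_pair_ne κ
  refine ⟨fun _ v => if v i = 1 then v i else v k, ⟨fun _ s => ite_self s, fun 𝒞 => ?_⟩,
    fun ⟨h, hh⟩ => hik ?_⟩
  · obtain ⟨D, hD⟩ := A.exists_signVector_apply_eq a
      (if A.signVector (𝒞 i) a = 1 then A.signVector (𝒞 i) a else A.signVector (𝒞 k) a)
    exact ⟨D, fun j => by rw [ha j, hD]⟩
  · have heq (l : κ) (hl : l = i ∨ l = k) : h = l := by
      have := congrFun (hh a) (Function.update (fun _ => -1) l 1)
      by_contra hne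
      rcases hl with rfl | rfl <;> simp [Function.update_of_ne, hne, hik] at this
    exact (heq i (Or.inl rfl)).symm.trans (heq k (Or.inr rfl))

namespace IsPolymorphism

variable {f : ι → (κ → ℤˣ) → ℤˣ}

theorem eq_eval_default [Unique κ] (hf : A.IsPolymorphism f) (j : ι) :
    f j = Function.eval default := by
  funext v
  exact (congrArg (f j) (funext fun i => congrArg v (Subsingleton.elim i default))).trans
    (hf.apply_const j (v default))

theorem preservesNotAllEqual (hf : A.IsPolymorphism f) {c : ι → ℝ}
    (hc : IsElementaryVector (relations A.form) c) {σ : Function.support c → ℤˣ}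
    (hσ : ∀ j, 0 < σ j • c j) :
    PreservesNotAllEqual fun (j : Function.support c) v => σ j * f j fun i => σ j * v i := by
  intro x hx
  by_contra! hcol
  have hchamber (i : κ) :
      ∃ C : A.Ch, ∀ j : Function.support c, A.signVector C j = σ j * x j i := by
    obtain ⟨a, b, hab⟩ := hcol i
    obtain ⟨y, hy⟩ := hc.exists_forall_smul_apply_pos (w := fun j => x j i) hσ hab
    obtain ⟨C, hC⟩ := A.exists_signVector_eq_of_smul_pos y
    exact ⟨C, fun j => hC j _ (hy j)⟩
  choose 𝒞 h𝒞 using hchamber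
  obtain ⟨D, hD⟩ := hf.exists_signVector_eq 𝒞
  obtain ⟨y, hy⟩ := exists_mem_chamber D
  obtain ⟨j, k, hjk⟩ := exists_mul_ne_mul_of_mem_relations hc.mem hc.ne_zero hσ
    fun j => signVector_smul_form_pos hy j
  simp only [hD, h𝒞] at hjk
  exact hjk (hx j k)

theorem exists_eq_eval_of_isElementaryVector [Finite κ] (hf : A.IsPolymorphism f) {c : ι → ℝ}
    (hc : IsElementaryVector (relations A.form) c) :
    ∃ i, ∀ j, c j ≠ 0 → f j = Function.eval i := by
  have : Nonempty (Function.support c) :=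
    (Function.support_nonempty_iff.2 hc.ne_zero).to_subtype
  choose σ hσ using fun j : Function.support c => exists_units_smul_pos j.2
  obtain ⟨i, hi⟩ := (hf.preservesNotAllEqual hc hσ).exists_forall_eq_eval
    (fun j s => by rw [hf.apply_const, ← mul_assoc, Int.units_mul_self, one_mul])
    fun a b => by
      obtain ⟨d, hda, hdb, hd⟩ :=
        exists_ne_ne_apply_ne_zero_of_mem_relations hc.mem hc.ne_zero a b
      exact ⟨⟨d, hd⟩, fun h => hda (congrArg Subtype.val h), fun h => hdb (congrArg Subtype.val h)⟩
  refine ⟨i, fun j hj => funext fun v => mul_left_cancel (a := σ ⟨j, hj⟩) ?_⟩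
  simpa only [← mul_assoc, Int.units_mul_self, one_mul, Function.eval] using
    congrFun (hi ⟨j, hj⟩) fun k => σ ⟨j, hj⟩ * v k

theorem exists_eq_eval [Nontrivial ι] [Finite κ] (hf : A.IsPolymorphism f)
    (hA : A.Indecomposable) : ∃ i, ∀ j, f j = Function.eval i := by
  obtain ⟨a, b, hab⟩ := exists_pair_ne ι
  obtain ⟨c, hc, ⟨_, rfl, hca⟩, -⟩ := hA.exists_isElementaryVector (Set.singleton_nonempty a)
    ⟨b, hab.symm⟩
  obtain ⟨i, hi⟩ := hf.exists_eq_eval_of_isElementaryVector hc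
  refine ⟨i, ?_⟩
  by_contra! hne
  obtain ⟨d, hd, ⟨p, hp, hdp⟩, q, hq, hdq⟩ :=
    hA.exists_isElementaryVector (P := {j | f j = Function.eval i}) ⟨_, hi _ hca⟩ hne
  obtain ⟨k, hk⟩ := hf.exists_eq_eval_of_isElementaryVector hd
  obtain rfl : i = k := eval_units_int_injective (hp.symm.trans (hk p hdp))
  exact hq (hk q hdq)

end IsPolymorphism

end Main

end Arrangement

/-- **Corollary.** For a nonempty real central arrangement `𝒜` and a positive integer `m`,
every admissible map is projective iff `m = 1` or (`𝒜` is indecomposable and `|𝒜| ≥ 3`). -/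
theorem every_admissible_projective_iff {ℓ : ℕ} {ι : Type} [Fintype ι] [Nonempty ι]
    (A : Arrangement ℓ ι) (m : ℕ) (hm : 0 < m) :
    (∀ Φ : (Fin m → A.Ch) → A.Ch, A.IsAdmissible m Φ → ∃ h : Fin m, Φ = fun 𝒞 => 𝒞 h) ↔
      (m = 1 ∨ (A.Indecomposable ∧ 3 ≤ Fintype.card ι)) := by
  rw [A.forall_isAdmissible_exists_eq_proj_iff m]
  constructor
  · intro hproj
    refine or_iff_not_imp_left.2 fun hm1 => ?_
    have : Nontrivial (Fin m) := Fin.nontrivial_iff_two_le.2 (by omega)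
    have hA : A.Indecomposable := fun hdec => by
      obtain ⟨f, hf, hne⟩ := hdec.exists_isPolymorphism (κ := Fin m)
      exact hne (hproj f hf)
    have hcard1 : Fintype.card ι ≠ 1 := fun hcard => by
      obtain ⟨f, hf, hne⟩ := Arrangement.exists_isPolymorphism_of_card_eq_one (κ := Fin m) hcard
      exact hne (hproj f hf)
    have hcard2 : Fintype.card ι ≠ 2 := mt Arrangement.decomposable_of_card_eq_two hA
    have hcard0 : 0 < Fintype.card ι := Fintype.card_pos
    exact ⟨hA, by omega⟩
  · rintro (rfl | ⟨hA, hcard⟩) f hf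
    · exact ⟨default, hf.eq_eval_default⟩
    · have : Nontrivial ι := Fintype.one_lt_card_iff_nontrivial.1 (by omega)
      exact hf.exists_eq_eval hA
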